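/- For every polytope P of even dimension 2k in ℝ^{2k} with 0 in its interior, g_k(P) = g_k(P*), where P* is the polar polytope of P. -/

import Mathlib

open Classical Polynomial

section PolytopeDefs

variable {V : Type*} [AddCommGroup V] [Module ℝ V]

/-- A polytope: the convex hull of finitely many points. -/
def IsPolytope (P : Set V) : Prop := ∃ S : Finset V, P = convexHull ℝ (S : Set V)

/-- Faces of a polytope (or of a cone): the set itself, the empty face, and the
sets of maximizers of linear functionals (equivalently, intersections with
supporting hyperplanes). -/
def IsFace (P F : Set V) : Prop :=
  F = P ∨ F = ∅ ∨ ∃ l : V →ₗ[ℝ] ℝ, F = {x | x ∈ P ∧ ∀ y ∈ P, l y ≤ l x}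

/-- Dimension of a polytope: the dimension of its affine span, with the
convention `pdim ∅ = -1`. -/
noncomputable def pdim (P : Set V) : ℤ :=
  if P = ∅ then -1 else (Module.finrank ℝ (affineSpan ℝ P).direction : ℤ)

/-- The `g`-truncation: from the toric `h`-polynomial of a `d`-dimensional
polytope to its toric `g`-polynomial, via `g_k = h_k - h_{k-1}` for
`0 ≤ k ≤ d/2`, with `h_{-1} = 0`. -/
noncomputable def truncG (d : ℤ) (h : Polynomial ℚ) : Polynomial ℚ :=
  ∑ k ∈ Finset.range (d.toNat / 2 + 1),
    Polynomial.C (h.coeff k - if k = 0 then 0 else h.coeff (k - 1)) * Polynomial.X ^ k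

/-- Fuelled recursion computing the toric `h`-polynomial of the interval `[F,G]`
of a face lattice (with `F` playing the role of the empty face):
`h([F,G],t) = ∑_{F ≤ G' < G} g([F,G'],t) · (t-1)^{dim G - dim G' - 1}`. -/
noncomputable def relHAux : ℕ → Set V → Set V → Polynomial ℚ
  | 0, _, _ => 1
  | n + 1, F, G =>
      if G = F then 1
      else ∑ᶠ G' ∈ {G' : Set V | IsFace G G' ∧ F ⊆ G' ∧ G' ≠ G},
        truncG (pdim G' - pdim F - 1) (relHAux n F G') *
          (Polynomial.X - 1) ^ (pdim G - pdim G' - 1).toNat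

/-- The toric `h`-polynomial of the interval `[F,G]` in a face lattice. -/
noncomputable def relH (F G : Set V) : Polynomial ℚ := relHAux (pdim G + 1).toNat F G

/-- The toric `g`-polynomial of the interval `[F,G]` in a face lattice;
`relG F P` is the polynomial `g(P/F, t)`. -/
noncomputable def relG (F G : Set V) : Polynomial ℚ :=
  truncG (pdim G - pdim F - 1) (relH F G)

/-- The toric `h`-polynomial `h(P,t)` of a polytope `P`. -/
noncomputable def toricH (P : Set V) : Polynomial ℚ := relH ∅ P

/-- The toric `g`-polynomial `g(P,t)` of a polytope `P`. -/
noncomputable def toricG (P : Set V) : Polynomial ℚ := relG ∅ P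

end PolytopeDefs
/-- The polar polytope `P* = {w | ⟨v,w⟩ ≥ -1 for all v ∈ P}` of a polytope in
`ℝ^n` (with the standard inner product). -/
def polarSet {n : ℕ} (P : Set (Fin n → ℝ)) : Set (Fin n → ℝ) :=
  {w | ∀ v ∈ P, -1 ≤ ∑ j, v j * w j}


lemma rightLim_exists {α : Type*} (l : Filter α) [l.NeBot] :
    ∃ R : (α → ℚ) →ₗ[ℚ] ℚ, ∀ f c, (∀ᶠ s in l, f s = c) → R f = c := by
  let ev : ℚ →ₗ[ℚ] (l.Germ ℚ) :=
    { toFun := fun c => (c : l.Germ ℚ)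
      map_add' := fun _ _ => rfl
      map_smul' := fun _ _ => rfl }
  have hev : LinearMap.ker ev = ⊥ := by
    rw [LinearMap.ker_eq_bot]
    intro a b h
    exact Filter.Germ.const_inj.1 h
  obtain ⟨L, hL⟩ := LinearMap.exists_leftInverse_of_injective ev hev
  let q : (α → ℚ) →ₗ[ℚ] (l.Germ ℚ) :=
    { toFun := fun f => (f : l.Germ ℚ)
      map_add' := fun _ _ => rfl
      map_smul' := fun _ _ => rfl }
  refine ⟨L ∘ₗ q, fun f c h => ?_⟩
  have : q f = ev c := Filter.Germ.coe_eq.2 h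
  rw [LinearMap.comp_apply, this]
  exact LinearMap.congr_fun hL c

lemma chi_one_exists : ∃ χ : (ℝ → ℚ) →ₗ[ℚ] ℚ,
    (∀ a : ℝ, χ (Set.indicator {a} 1) = 1) ∧
    (∀ S : Set ℝ, S.Nonempty → S.OrdConnected → IsOpen S → χ (Set.indicator S 1) = -1) := by
  choose R hR using fun t : ℝ => rightLim_exists (nhdsWithin t (Set.Ioi t))
  obtain ⟨R0, hR0⟩ := rightLim_exists (Filter.atBot : Filter ℝ)
  have hinj : LinearMap.ker (Finsupp.lcoeFun : (ℝ →₀ ℚ) →ₗ[ℚ] (ℝ → ℚ)) = ⊥ := by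
    rw [LinearMap.ker_eq_bot]
    exact DFunLike.coe_injective
  obtain ⟨L, hL⟩ := LinearMap.exists_leftInverse_of_injective _ hinj
  let T : (ℝ → ℚ) →ₗ[ℚ] (ℝ → ℚ) := LinearMap.pi (fun t => LinearMap.proj t - R t)
  have hT : ∀ f t, T f t = f t - R t f := fun f t => rfl
  let Sg : (ℝ →₀ ℚ) →ₗ[ℚ] ℚ := Finsupp.linearCombination ℚ (fun _ => (1 : ℚ))
  have hs : ∀ f a c, T f = Pi.single a c → Sg (L (T f)) = c := by
    intro f a c h
    have : T f = Finsupp.lcoeFun (R := ℚ) (Finsupp.single a c) := by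
      rw [h]; ext t; simp [Finsupp.single_apply, Pi.single_apply, eq_comm]
    rw [this, ← LinearMap.comp_apply L, hL]
    simp [Sg]
  refine ⟨Sg ∘ₗ L ∘ₗ T - R0, ?_, ?_⟩
  · intro a
    have h0 : R0 (Set.indicator {a} 1) = 0 := by
      apply hR0
      filter_upwards [Filter.eventually_lt_atBot a] with s hs
      simp [hs.ne]
    have h1 : T (Set.indicator {a} 1) = Pi.single a 1 := by
      ext t
      have : R t (Set.indicator {a} 1) = 0 := by
        apply hR
        rcases lt_or_ge t a with h | h
        · filter_upwards [Ioo_mem_nhdsGT h] with s hs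
          simp [hs.2.ne]
        · filter_upwards [self_mem_nhdsWithin] with s hs
          have : s ≠ a := (lt_of_le_of_lt h hs).ne'
          simp [this]
      rw [hT, this]
      by_cases h : t = a
      · subst h; simp
      · simp [h]
    simp only [LinearMap.sub_apply, LinearMap.comp_apply, h0, hs _ _ _ h1]
    norm_num
  · intro S hne hoc ho
    have hin : ∀ t ∈ S, R t (Set.indicator S 1) = 1 := by
      intro t ht
      apply hR
      filter_upwards [mem_nhdsWithin_of_mem_nhds (ho.mem_nhds ht)] with s hs
      simp [hs]
    have habove : ∀ t ∉ S, (∃ s ∈ S, s < t) → R t (Set.indicator S 1) = 0 := by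
      rintro t ht ⟨s, hs, hst⟩
      apply hR
      filter_upwards [self_mem_nhdsWithin] with x hx
      have : x ∉ S := fun h => ht (hoc.out hs h ⟨hst.le, le_of_lt hx⟩)
      simp [this]
    by_cases hb : BddBelow S
    · have hglb := isGLB_csInf hne hb
      set a := sInf S
      have haS : a ∉ S := by
        intro ha
        obtain ⟨e, he, hsub⟩ := Metric.isOpen_iff.1 ho a ha
        have : a - e / 2 ∈ S := hsub (by simp [abs_of_pos he]; linarith)
        have := hglb.1 this
        linarith
      have hap : ∀ t, a < t → ∃ s ∈ S, s < t := by
        intro t h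
        obtain ⟨s, hs, _, h2⟩ := hglb.exists_between h
        exact ⟨s, hs, h2⟩
      have h0 : R0 (Set.indicator S 1) = 0 := by
        apply hR0
        filter_upwards [Filter.eventually_lt_atBot a] with s hs
        have : s ∉ S := fun h => absurd (hglb.1 h) (not_le.2 hs)
        simp [this]
      have h1 : T (Set.indicator S 1) = Pi.single a (-1) := by
        ext t
        rw [hT]
        rcases lt_trichotomy t a with h | h | h
        · have : t ∉ S := fun h' => absurd (hglb.1 h') (not_le.2 h)
          have h2 : R t (Set.indicator S 1) = 0 := by
            apply hR
            filter_upwards [Ioo_mem_nhdsGT h] with s hs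
            have : s ∉ S := fun h => absurd (hglb.1 h) (not_le.2 hs.2)
            simp [this]
          simp [this, h2, h.ne]
        · subst h
          have h2 : R a (Set.indicator S 1) = 1 := by
            apply hR
            obtain ⟨s0, hs0⟩ := hne
            have hlt : a < s0 := lt_of_le_of_ne (hglb.1 hs0) (fun h => haS (h ▸ hs0))
            filter_upwards [Ioo_mem_nhdsGT hlt] with s hs
            obtain ⟨s1, hs1, h3⟩ := hap s hs.1
            have : s ∈ S := hoc.out hs1 hs0 ⟨h3.le, hs.2.le⟩
            simp [this]
          simp [haS, h2]
        · by_cases hS : t ∈ S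
          · simp [hin t hS, hS, h.ne']
          · simp [habove t hS (hap t h), hS, h.ne']
      simp only [LinearMap.sub_apply, LinearMap.comp_apply, h0, hs _ _ _ h1]
      norm_num
    · have hlow : ∀ t, ∃ s ∈ S, s < t := by
        intro t
        by_contra! h
        exact hb ⟨t, fun s hs => h s hs⟩
      have h0 : R0 (Set.indicator S 1) = 1 := by
        apply hR0
        obtain ⟨s0, hs0⟩ := hne
        filter_upwards [Filter.eventually_lt_atBot s0] with s hs
        obtain ⟨s1, hs1, h3⟩ := hlow s
        have : s ∈ S := hoc.out hs1 hs0 ⟨h3.le, hs.le⟩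
        simp [this]
      have h1 : T (Set.indicator S 1) = Pi.single 0 0 := by
        ext t
        rw [hT]
        by_cases hS : t ∈ S
        · simp [hin t hS, hS]
        · simp [habove t hS (hlow t), hS]
      simp only [LinearMap.sub_apply, LinearMap.comp_apply, h0, hs _ _ _ h1]
      norm_num

/-- algebraically relatively open convex set -/
def ARO {E : Type*} [AddCommGroup E] [Module ℝ E] (U : Set E) : Prop :=
  Convex ℝ U ∧ ∀ x ∈ U, ∀ y ∈ U, ∃ e : ℝ, 0 < e ∧ x + e • (x - y) ∈ U

lemma ARO.step {E : Type*} [AddCommGroup E] [Module ℝ E] {U : Set E} (hU : ARO U)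
    {x : E} (hx : x ∈ U) {w : E} (hw : w ∈ vectorSpan ℝ U) :
    ∃ e : ℝ, 0 < e ∧ x + e • w ∈ U := by
  rw [vectorSpan_eq_span_vsub_set_right ℝ hx] at hw
  have hshrink : ∀ (w : E) (e d : ℝ), 0 < d → d ≤ e → x + e • w ∈ U → x + d • w ∈ U := by
    intro w e d hd hde h
    have he : 0 < e := lt_of_lt_of_le hd hde
    have := hU.1.add_smul_mem (x := x) (y := e • w) hx h (t := d / e)
      ⟨by positivity, (div_le_one he).2 hde⟩
    rwa [smul_smul, div_mul_cancel₀ _ he.ne'] at this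
  have key : ∀ w, (∃ e : ℝ, 0 < e ∧ x + e • w ∈ U) → ∃ e : ℝ, 0 < e ∧ x + e • (-w) ∈ U := by
    rintro w ⟨e, he, h⟩
    obtain ⟨d, hd, h2⟩ := hU.2 x hx _ h
    refine ⟨d * e, by positivity, ?_⟩
    convert h2 using 2
    simp [smul_smul]
  induction hw using Submodule.span_induction with
  | mem w hw =>
    obtain ⟨y, hy, rfl⟩ := hw
    exact ⟨1, one_pos, by simpa using hy⟩
  | zero => exact ⟨1, one_pos, by simpa using hx⟩
  | add a b _ _ ha hb =>
    obtain ⟨e, he, ha⟩ := ha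
    obtain ⟨d, hd, hb⟩ := hb
    have ha' := hshrink a e (min e d) (lt_min he hd) (min_le_left _ _) ha
    have hb' := hshrink b d (min e d) (lt_min he hd) (min_le_right _ _) hb
    refine ⟨min e d / 2, by positivity, ?_⟩
    have := hU.1 ha' hb' (show (0:ℝ) ≤ 1/2 by norm_num) (show (0:ℝ) ≤ 1/2 by norm_num) (by norm_num)
    convert this using 1
    module
  | smul c a _ ha =>
    have hpos : ∀ (c : ℝ) (a : E), 0 < c → (∃ e : ℝ, 0 < e ∧ x + e • a ∈ U) →
        ∃ e : ℝ, 0 < e ∧ x + e • (c • a) ∈ U := by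
      rintro c a hc ⟨e, he, h⟩
      refine ⟨e / c, by positivity, ?_⟩
      rwa [smul_smul, div_mul_cancel₀ _ hc.ne']
    rcases lt_trichotomy c 0 with h | h | h
    · have := hpos (-c) (-a) (by linarith) (key a ha)
      simpa using this
    · subst h; exact ⟨1, one_pos, by simpa using hx⟩
    · exact hpos c a h ha

lemma ARO.fiber {E : Type*} [AddCommGroup E] [Module ℝ E] {U : Set E} (hU : ARO U) (p v : E)
    (hv : v ∈ vectorSpan ℝ U) :
    {t : ℝ | p + t • v ∈ U}.OrdConnected ∧ IsOpen {t : ℝ | p + t • v ∈ U} := by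
  have hc : Convex ℝ {t : ℝ | p + t • v ∈ U} := by
    intro s hs t ht a b ha hb hab
    have := hU.1 hs ht ha hb hab
    simp only [Set.mem_ofPred_eq]
    convert this using 1
    have : p = (a + b) • p := by rw [hab, one_smul]
    nth_rw 1 [this]
    simp only [smul_eq_mul]
    module
  have hoc := hc.ordConnected
  refine ⟨hoc, ?_⟩
  rw [isOpen_iff_mem_nhds]
  intro t ht
  obtain ⟨e, he, h1⟩ := hU.step ht hv
  obtain ⟨d, hd, h2⟩ := hU.step ht (Submodule.neg_mem _ hv)
  have h1' : t + e ∈ {t : ℝ | p + t • v ∈ U} := by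
    simp only [Set.mem_ofPred_eq]; convert h1 using 1; module
  have h2' : t - d ∈ {t : ℝ | p + t • v ∈ U} := by
    simp only [Set.mem_ofPred_eq]; convert h2 using 1; module
  exact Filter.mem_of_superset (Icc_mem_nhds (by linarith) (by linarith)) (hoc.out h2' h1')

lemma ARO.image {E F : Type*} [AddCommGroup E] [Module ℝ E] [AddCommGroup F] [Module ℝ F]
    {U : Set E} (hU : ARO U) (f : E →ₗ[ℝ] F) : ARO (f '' U) := by
  refine ⟨hU.1.linear_image f, ?_⟩
  rintro _ ⟨x, hx, rfl⟩ _ ⟨y, hy, rfl⟩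
  obtain ⟨e, he, h⟩ := hU.2 x hx y hy
  exact ⟨e, he, _, h, by simp⟩

lemma vectorSpan_image_lin {E F : Type*} [AddCommGroup E] [Module ℝ E] [AddCommGroup F]
    [Module ℝ F] (U : Set E) (f : E →ₗ[ℝ] F) :
    vectorSpan ℝ (f '' U) = (vectorSpan ℝ U).map f := by
  have := AffineMap.map_vectorSpan f.toAffineMap (s := U)
  simpa using this.symm

lemma finrank_map_mkQ {E : Type*} [AddCommGroup E] [Module ℝ E] [FiniteDimensional ℝ E]
    (v : E) (hv : v ≠ 0) (S : Submodule ℝ E) :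
    Module.finrank ℝ (S.map (Submodule.span ℝ {v}).mkQ) + (if v ∈ S then 1 else 0)
      = Module.finrank ℝ S := by
  set q := (Submodule.span ℝ {v}).mkQ
  have h1 := LinearMap.finrank_range_add_finrank_ker (q.domRestrict S)
  rw [LinearMap.range_domRestrict] at h1
  rw [← h1]
  congr 1
  have h2 : (LinearMap.ker (q.domRestrict S)).map S.subtype = Submodule.span ℝ {v} ⊓ S := by
    ext x
    simp [q, LinearMap.mem_ker, Submodule.mem_map]
  have h3 : Module.finrank ℝ (LinearMap.ker (q.domRestrict S)) =
      Module.finrank ℝ (Submodule.span ℝ {v} ⊓ S : Submodule ℝ E) := by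
    rw [← h2]
    exact (Submodule.finrank_map_subtype_eq S _).symm
  rw [h3]
  split_ifs with h
  · rw [inf_eq_left.2 (by simpa using h), finrank_span_singleton hv]
  · have : Submodule.span ℝ {v} ⊓ S = ⊥ := by
      rw [eq_bot_iff]
      rintro x ⟨hx1, hx2⟩
      obtain ⟨c, rfl⟩ := Submodule.mem_span_singleton.1 hx1
      by_cases hc : c = 0
      · simp [hc]
      · exact absurd ((S.smul_mem_iff hc).1 hx2) h
    rw [this, finrank_bot]

def IsChi {E : Type*} [AddCommGroup E] [Module ℝ E] (χ : (E → ℚ) →ₗ[ℚ] ℚ) : Prop :=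
  ∀ U : Set E, ARO U → U.Nonempty →
    χ (Set.indicator U 1) = (-1) ^ (Module.finrank ℝ (vectorSpan ℝ U))

lemma chi_step {E : Type*} [AddCommGroup E] [Module ℝ E] [FiniteDimensional ℝ E]
    (v : E) (hv : v ≠ 0) (h : ∃ χ' : ((E ⧸ Submodule.span ℝ {v}) → ℚ) →ₗ[ℚ] ℚ, IsChi χ') :
    ∃ χ : (E → ℚ) →ₗ[ℚ] ℚ, IsChi χ ∧
      ∀ D : Set E, (∀ x : E, {t : ℝ | x + t • v ∈ D} = ∅ ∨
        ∃ a, {t : ℝ | x + t • v ∈ D} = Set.Ici a) → χ (Set.indicator D 1) = 0 := by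
  obtain ⟨χ', hχ'⟩ := h
  obtain ⟨χ1, hp, ho⟩ := chi_one_exists
  set q := (Submodule.span ℝ {v}).mkQ
  obtain ⟨s, hs⟩ := q.exists_rightInverse_of_surjective (by simp [q])
  have hs' : ∀ y, q (s y) = y := fun y => LinearMap.congr_fun hs y
  let T : (E → ℚ) →ₗ[ℚ] ((E ⧸ Submodule.span ℝ {v}) → ℚ) :=
    LinearMap.pi (fun y => χ1 ∘ₗ (LinearMap.funLeft ℚ ℚ (fun t : ℝ => s y + t • v)))
  have hT : ∀ (D : Set E) y, T (Set.indicator D 1) y =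
      χ1 (Set.indicator {t : ℝ | s y + t • v ∈ D} 1) := fun D y => rfl
  have hqv : q v = 0 := by simp [q]
  refine ⟨χ' ∘ₗ T, ?_, ?_⟩
  · intro U hU hne
    have hmem : ∀ y, y ∉ q '' U → {t : ℝ | s y + t • v ∈ U} = ∅ := by
      intro y hy
      ext t
      simp only [Set.mem_ofPred_eq, Set.mem_empty_iff_false, iff_false]
      exact fun h => hy ⟨_, h, by simp [hs', hqv]⟩
    have hmem2 : ∀ y, y ∈ q '' U → {t : ℝ | s y + t • v ∈ U}.Nonempty := by
      rintro _ ⟨x, hx, rfl⟩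
      have : x - s (q x) ∈ Submodule.span ℝ {v} := by
        have : q (x - s (q x)) = 0 := by simp [hs']
        exact (Submodule.Quotient.mk_eq_zero _).1 this
      obtain ⟨c, hc⟩ := Submodule.mem_span_singleton.1 this
      exact ⟨c, by simpa [hc] using hx⟩
    have hTU : T (Set.indicator U 1) =
        ((-1 : ℚ) ^ (if v ∈ vectorSpan ℝ U then 1 else 0)) • Set.indicator (q '' U) 1 := by
      ext y
      rw [hT]
      by_cases hy : y ∈ q '' U
      · have hn := hmem2 y hy
        simp only [Pi.smul_apply, Set.indicator_of_mem hy, Pi.one_apply, smul_eq_mul, mul_one]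
        split_ifs with hvU
        · obtain ⟨h1, h2⟩ := hU.fiber (s y) v hvU
          rw [ho _ hn h1 h2]; simp
        · obtain ⟨a, ha⟩ := hn
          have : {t : ℝ | s y + t • v ∈ U} = {a} := by
            ext t
            simp only [Set.mem_ofPred_eq, Set.mem_singleton_iff]
            refine ⟨fun ht => ?_, fun h => h ▸ ha⟩
            by_contra hta
            apply hvU
            have := vsub_mem_vectorSpan ℝ ht ha
            have h2 : (s y + t • v) -ᵥ (s y + a • v) = (t - a) • v := by
              simp only [vsub_eq_sub]; module
            rw [h2] at this
            exact ((vectorSpan ℝ U).smul_mem_iff (sub_ne_zero.2 hta)).1 this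
          rw [this, hp]; simp
      · rw [hmem y hy, Set.indicator_empty']
        simp [hy]
    rw [LinearMap.comp_apply, hTU, map_smul, hχ' _ (hU.image q) (hne.image _),
      vectorSpan_image_lin, ← finrank_map_mkQ v hv (vectorSpan ℝ U), smul_eq_mul, ← pow_add,
      add_comm]
  · intro D hD
    have : T (Set.indicator D 1) = 0 := by
      ext y
      rw [hT]
      rcases hD (s y) with h | ⟨a, h⟩
      · rw [h, Set.indicator_empty']; simp
      · rw [h]
        have : (Set.indicator (Set.Ici a) 1 : ℝ → ℚ) =
            Set.indicator {a} 1 + Set.indicator (Set.Ioi a) 1 := by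
          ext t
          rcases lt_trichotomy t a with h | h | h
          · simp [h.ne, h.not_gt, h]
          · subst h; simp
          · simp [h.ne', h, h.le]
        rw [this, map_add, hp, ho _ ⟨a + 1, by simp⟩ Set.ordConnected_Ioi isOpen_Ioi]
        simp
    rw [LinearMap.comp_apply, this, map_zero]

lemma chi_exists (n : ℕ) : ∀ (E : Type) [AddCommGroup E] [Module ℝ E] [FiniteDimensional ℝ E],
    Module.finrank ℝ E = n → ∃ χ : (E → ℚ) →ₗ[ℚ] ℚ, IsChi χ := by
  induction n with
  | zero =>
    intro E _ _ _ h
    have hsub : Subsingleton E := Module.finrank_zero_iff.1 h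
    refine ⟨LinearMap.proj 0, ?_⟩
    intro U hU ⟨x, hx⟩
    have h0 : (0 : E) ∈ U := by rwa [Subsingleton.elim 0 x]
    have : vectorSpan ℝ U = ⊥ := Subsingleton.elim _ _
    have h1 : Module.finrank ℝ (vectorSpan ℝ U) = 0 := by rw [this]; exact finrank_bot ℝ E
    rw [h1]; simp [h0]
  | succ n ih =>
    intro E _ _ _ h
    have : Nontrivial E := Module.nontrivial_of_finrank_pos (R := ℝ) (by omega)
    obtain ⟨v, hv⟩ := exists_ne (0 : E)
    obtain ⟨χ, h1, _⟩ := chi_step v hv (ih _ (by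
      have := Submodule.finrank_quotient_add_finrank (Submodule.span ℝ {v})
      rw [finrank_span_singleton hv] at this
      omega))
    exact ⟨χ, h1⟩

set_option linter.unusedSectionVars false

section Config

variable {ι : Type} [Fintype ι] {W : Type} [AddCommGroup W] [Module ℝ W]

/-- zero sets of nonnegative functionals -/
def IsF (u : ι → W) (K : Set ι) : Prop :=
  ∃ l : Module.Dual ℝ W, (∀ i, 0 ≤ l (u i)) ∧ ∀ i, l (u i) = 0 ↔ i ∈ K

noncomputable def rkF (u : ι → W) (K : Set ι) : ℕ := Module.finrank ℝ (Submodule.span ℝ (u '' K))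

def cellF (u : ι → W) (J K : Set ι) : Set (Module.Dual ℝ W) :=
  {x | (∀ i ∈ K, x (u i) = 0) ∧ ∀ j ∈ J, j ∉ K → 0 < x (u j)}

lemma exists_eps (s t : ι → ℝ) :
    ∃ e : ℝ, 0 < e ∧ ∀ i, 0 < s i → 0 < s i + e * t i := by
  have : ∀ᶠ e in nhdsWithin (0 : ℝ) (Set.Ioi 0), ∀ i, 0 < s i → 0 < s i + e * t i := by
    rw [Filter.eventually_all]
    intro i
    by_cases h : 0 < s i
    · have hc : Filter.Tendsto (fun e : ℝ => s i + e * t i) (nhds 0) (nhds (s i + 0 * t i)) :=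
        (Continuous.tendsto (by fun_prop) 0)
      have := hc.eventually (lt_mem_nhds (by simpa using h))
      filter_upwards [mem_nhdsWithin_of_mem_nhds this] with e he _
      exact he
    · exact Filter.Eventually.of_forall (fun e h' => absurd h' h)
  obtain ⟨e, h1, h2⟩ := (this.and self_mem_nhdsWithin).exists
  exact ⟨e, h2, h1⟩

lemma cellF_step (u : ι → W) (J K : Set ι) {x w : Module.Dual ℝ W} (hx : x ∈ cellF u J K)
    (hw : ∀ i ∈ K, w (u i) = 0) : ∃ e : ℝ, 0 < e ∧ x + e • w ∈ cellF u J K := by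
  obtain ⟨e, he, h⟩ := exists_eps (fun i => x (u i)) (fun i => w (u i))
  refine ⟨e, he, ?_, ?_⟩
  · intro i hi
    simp [hx.1 i hi, hw i hi]
  · intro j hj hjK
    simpa using h j (hx.2 j hj hjK)

lemma cellF_ARO (u : ι → W) (J K : Set ι) : ARO (cellF u J K) := by
  constructor
  · intro x hx y hy a b ha hb hab
    refine ⟨fun i hi => by simp [hx.1 i hi, hy.1 i hi], fun j hj hjK => ?_⟩
    have h1 := hx.2 j hj hjK
    have h2 := hy.2 j hj hjK
    simp only [LinearMap.add_apply, LinearMap.smul_apply, smul_eq_mul]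
    rcases ha.eq_or_lt with h | h
    · have : b = 1 := by linarith
      subst h; subst this; simpa using h2
    · have := mul_pos h h1
      have := mul_nonneg hb h2.le
      linarith
  · intro x hx y hy
    exact cellF_step u J K hx (fun i hi => by simp [hx.1 i hi, hy.1 i hi])

lemma mem_annF (u : ι → W) (K : Set ι) (w : Module.Dual ℝ W) :
    w ∈ (Submodule.span ℝ (u '' K)).dualAnnihilator ↔ ∀ i ∈ K, w (u i) = 0 := by
  rw [Submodule.mem_dualAnnihilator]
  constructor
  · intro h i hi
    exact h _ (Submodule.subset_span ⟨i, hi, rfl⟩)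
  · intro h x hx
    have : Submodule.span ℝ (u '' K) ≤ LinearMap.ker w := by
      rw [Submodule.span_le]
      rintro _ ⟨i, hi, rfl⟩
      exact h i hi
    exact this hx

lemma cellF_vectorSpan (u : ι → W) (J K : Set ι) (hne : (cellF u J K).Nonempty) :
    vectorSpan ℝ (cellF u J K) = (Submodule.span ℝ (u '' K)).dualAnnihilator := by
  apply le_antisymm
  · rw [vectorSpan_def, Submodule.span_le]
    rintro _ ⟨x, hx, y, hy, rfl⟩
    rw [SetLike.mem_coe, mem_annF]
    intro i hi
    simp [hx.1 i hi, hy.1 i hi]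
  · intro w hw
    rw [mem_annF] at hw
    obtain ⟨x, hx⟩ := hne
    obtain ⟨e, he, h⟩ := cellF_step u J K hx hw
    have := vsub_mem_vectorSpan ℝ h hx
    simp only [vsub_eq_sub, add_sub_cancel_left] at this
    exact ((vectorSpan ℝ _).smul_mem_iff he.ne').1 this

lemma isF_of_cell (u : ι → W) {J K : Set ι} (hJ : IsF u J) (hKJ : K ⊆ J)
    (hne : (cellF u J K).Nonempty) : IsF u K := by
  obtain ⟨m, hm1, hm2⟩ := hJ
  obtain ⟨x, hx⟩ := hne
  obtain ⟨e, he, h⟩ := exists_eps (fun i => m (u i)) (fun i => x (u i))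
  have hpos : ∀ i, i ∉ K → 0 < m (u i) + e * x (u i) := by
    intro i hi
    by_cases hJ : i ∈ J
    · rw [(hm2 i).2 hJ]
      have := mul_pos he (hx.2 i hJ hi)
      linarith
    · exact h i (lt_of_le_of_ne (hm1 i) (fun h => hJ ((hm2 i).1 h.symm)))
  have hz : ∀ i, i ∈ K → m (u i) + e * x (u i) = 0 := by
    intro i hi
    rw [(hm2 i).2 (hKJ hi), hx.1 i hi]; simp
  refine ⟨m + e • x, fun i => ?_, fun i => ?_⟩
  · simp only [LinearMap.add_apply, LinearMap.smul_apply, smul_eq_mul]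
    by_cases hi : i ∈ K
    · exact (hz i hi).ge
    · exact (hpos i hi).le
  · simp only [LinearMap.add_apply, LinearMap.smul_apply, smul_eq_mul]
    exact ⟨fun h => by_contra fun hi => (hpos i hi).ne' h, hz i⟩

lemma cell_of_isF (u : ι → W) {J K : Set ι} (hK : IsF u K) : (cellF u J K).Nonempty := by
  obtain ⟨l, h1, h2⟩ := hK
  exact ⟨l, fun i hi => (h2 i).2 hi, fun j _ hj =>
    lt_of_le_of_ne (h1 j) (fun h => hj ((h2 j).1 h.symm))⟩

lemma rkF_add [FiniteDimensional ℝ W] (u : ι → W) (K : Set ι) :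
    rkF u K + Module.finrank ℝ (Submodule.span ℝ (u '' K)).dualAnnihilator
      = Module.finrank ℝ W :=
  Subspace.finrank_add_finrank_dualAnnihilator_eq _

lemma rkF_strict [FiniteDimensional ℝ W] (u : ι → W) {K J : Set ι} (hK : IsF u K) (h : K ⊂ J) :
    rkF u K < rkF u J := by
  apply Submodule.finrank_lt_finrank_of_lt
  refine lt_of_le_of_ne (Submodule.span_mono (Set.image_mono h.1)) (fun he => ?_)
  obtain ⟨l, h1, h2⟩ := hK
  obtain ⟨j, hj, hjK⟩ := Set.exists_of_ssubset h
  apply hjK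
  rw [← h2]
  have h3 : l ∈ (Submodule.span ℝ (u '' K)).dualAnnihilator :=
    (mem_annF u K l).2 fun i hi => (h2 i).2 hi
  rw [he, mem_annF] at h3
  exact h3 j hj

lemma euler_config [FiniteDimensional ℝ W] (u : ι → W) {I J : Set ι} (hI : IsF u I)
    (hJ : IsF u J) (hIJ : I ⊂ J) :
    ∑ K : Set ι with IsF u K ∧ I ⊆ K ∧ K ⊆ J, (-1 : ℚ) ^ rkF u K = 0 := by
  obtain ⟨v, hv1, hv2⟩ := hI
  obtain ⟨j0, hj0, hj0I⟩ := Set.exists_of_ssubset hIJ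
  have hvpos : ∀ j, j ∉ I → 0 < v (u j) := fun j hj =>
    lt_of_le_of_ne (hv1 j) (fun h => hj ((hv2 j).1 h.symm))
  have hv : v ≠ 0 := by
    rintro rfl
    exact hj0I ((hv2 j0).1 rfl)
  obtain ⟨χ, hχ, hray⟩ := chi_step v hv (chi_exists _ _ rfl)
  set D : Set (Module.Dual ℝ W) := {x | (∀ i ∈ I, x (u i) = 0) ∧ ∀ j ∈ J, 0 ≤ x (u j)} with hDdef
  have hD0 : χ (Set.indicator D 1) = 0 := by
    apply hray
    intro x
    by_cases hx : ∀ i ∈ I, x (u i) = 0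
    · right
      have hne : (Finset.univ.filter (fun j => j ∈ J ∧ j ∉ I)).Nonempty := ⟨j0, by simp [hj0, hj0I]⟩
      refine ⟨(Finset.univ.filter (fun j => j ∈ J ∧ j ∉ I)).sup' hne
        (fun j => - x (u j) / v (u j)), ?_⟩
      ext t
      simp only [hDdef, Set.mem_ofPred_eq, LinearMap.add_apply, LinearMap.smul_apply, smul_eq_mul,
        Set.mem_Ici, Finset.sup'_le_iff, Finset.mem_filter, Finset.mem_univ, true_and]
      constructor
      · rintro ⟨_, h⟩ j ⟨hj, hjI⟩
        rw [div_le_iff₀ (hvpos j hjI)]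
        linarith [h j hj]
      · intro h
        refine ⟨fun i hi => by rw [hx i hi, (hv2 i).2 hi]; simp, fun j hj => ?_⟩
        by_cases hjI : j ∈ I
        · rw [hx j hjI, (hv2 j).2 hjI]; simp
        · have := h j ⟨hj, hjI⟩
          rw [div_le_iff₀ (hvpos j hjI)] at this
          linarith
    · left
      ext t
      simp only [Set.mem_ofPred_eq, Set.mem_empty_iff_false, iff_false]
      rintro ⟨h, _⟩
      apply hx
      intro i hi
      have := h i hi
      simpa [(hv2 i).2 hi] using this
  have hsum : (Set.indicator D 1 : Module.Dual ℝ W → ℚ) =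
      ∑ K : Set ι with IsF u K ∧ I ⊆ K ∧ K ⊆ J, Set.indicator (cellF u J K) 1 := by
    ext x
    rw [Finset.sum_apply]
    by_cases hx : x ∈ D
    · set K0 : Set ι := {i | i ∈ J ∧ x (u i) = 0} with hK0
      have hc : x ∈ cellF u J K0 := by
        refine ⟨fun i hi => hi.2, fun j hj hjK => ?_⟩
        exact lt_of_le_of_ne (hx.2 j hj) (fun h => hjK ⟨hj, h.symm⟩)
      have hsub : K0 ⊆ J := fun i hi => hi.1
      rw [Finset.sum_eq_single K0]
      · simp [hx, hc]
      · intro K hK hne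
        simp only [Finset.mem_filter, Finset.mem_univ, true_and] at hK
        rw [Set.indicator_of_notMem]
        intro hxK
        apply hne
        ext i
        constructor
        · intro hi; exact ⟨hK.2.2 hi, hxK.1 i hi⟩
        · intro hi
          by_contra h
          exact (hxK.2 i hi.1 h).ne' hi.2
      · intro h
        exfalso
        apply h
        simp only [Finset.mem_filter, Finset.mem_univ, true_and]
        exact ⟨isF_of_cell u hJ hsub ⟨x, hc⟩, fun i hi => ⟨hIJ.1 hi, hx.1 i hi⟩, hsub⟩
    · rw [Set.indicator_of_notMem hx]
      symm
      apply Finset.sum_eq_zero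
      intro K hK
      simp only [Finset.mem_filter, Finset.mem_univ, true_and] at hK
      rw [Set.indicator_of_notMem]
      intro hxK
      apply hx
      refine ⟨fun i hi => hxK.1 i (hK.2.1 hi), fun j hj => ?_⟩
      by_cases h : j ∈ K
      · exact (hxK.1 j h).ge
      · exact (hxK.2 j hj h).le
  rw [hsum, map_sum] at hD0
  have h2 : ∀ K : Set ι, (-1 : ℚ) ^ rkF u K = (-1) ^ (Module.finrank ℝ W) *
      (-1) ^ Module.finrank ℝ (Submodule.span ℝ (u '' K)).dualAnnihilator := by
    intro K
    rw [← rkF_add u K, pow_add, mul_assoc, ← pow_add, ← two_mul, pow_mul]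
    simp
  rw [Finset.sum_congr rfl (fun K _ => h2 K), ← Finset.mul_sum]
  convert mul_zero _
  rw [← hD0]
  apply Finset.sum_congr rfl
  intro K hK
  simp only [Finset.mem_filter, Finset.mem_univ, true_and] at hK
  have hne := cell_of_isF u (J := J) hK.1
  rw [hχ _ (cellF_ARO u J K) hne, cellF_vectorSpan u J K hne]

end Config

section Comb

lemma reflect_sum' {α : Type*} (n : ℕ) (s : Finset α) (f : α → ℚ[X]) :
    reflect n (∑ i ∈ s, f i) = ∑ i ∈ s, reflect n (f i) := by
  induction s using Finset.induction_on with
  | empty => simp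
  | insert a s ha ih => rw [Finset.sum_insert ha, Finset.sum_insert ha, reflect_add, ih]

lemma natDegree_X_sub_one_pow (m : ℕ) : ((X - 1 : ℚ[X]) ^ m).natDegree = m := by
  have : (X - 1 : ℚ[X]) = X - C 1 := by simp
  rw [this, natDegree_pow, natDegree_X_sub_C, mul_one]

lemma reflect_X_sub_one_pow (m : ℕ) : reflect m ((X - 1 : ℚ[X]) ^ m) = (1 - X) ^ m := by
  induction m with
  | zero => simp
  | succ m ih =>
    rw [pow_succ, reflect_mul _ _ (natDegree_X_sub_one_pow m).le (G := 1), ih, pow_succ]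
    · congr 1
      ext i
      rw [coeff_reflect, ← revAtFun_eq]
      rcases i with _ | _ | i
      · simp [coeff_one, revAtFun, coeff_X]
      · simp [coeff_one, revAtFun, coeff_X]
      · simp [coeff_one, revAtFun, coeff_X]
    · simpa using (natDegree_X_sub_one_pow 1).le

lemma coeff_truncG (d : ℤ) (h : ℚ[X]) (k : ℕ) : (truncG d h).coeff k =
    if k ≤ d.toNat / 2 then -((X - 1) * h).coeff k else 0 := by
  unfold truncG
  rw [finsetSum_coeff]
  simp only [coeff_C_mul, coeff_X_pow, mul_ite, mul_one, mul_zero]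
  rw [Finset.sum_ite_eq]
  simp only [Finset.mem_range, Nat.lt_succ_iff]
  congr 1
  rw [sub_mul, one_mul, coeff_sub]
  rcases k with _ | k
  · simp
  · simp [coeff_X_mul]

variable {α : Type} [Fintype α] [PartialOrder α]

lemma neg_one_pow_sub {a b : ℕ} (h : a ≤ b) : (-1 : ℚ[X]) ^ (b - a) = (-1) ^ b * (-1) ^ a := by
  obtain ⟨c, rfl⟩ := Nat.exists_eq_add_of_le h
  rw [Nat.add_sub_cancel_left, pow_add, mul_right_comm, ← pow_add, ← two_mul, pow_mul]
  simp

theorem KL_main [OrderBot α] (r : α → ℕ) (hr : StrictMono r) (hr0 : r ⊥ = 0)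
    (hE : ∀ x y : α, x < y → ∑ z : α with x ≤ z ∧ z ≤ y, (-1 : ℚ[X]) ^ r z = 0)
    (g : α → ℚ[X]) (hg0 : g ⊥ = 1)
    (hg : ∀ y, y ≠ ⊥ → g y = truncG ((r y : ℤ) - 1)
      (∑ z : α with z < y, g z * (X - 1) ^ (r y - r z - 1))) (y : α) :
    (∑ z : α with z ≤ y, g z * (X - 1) ^ (r y - r z) = reflect (r y) (g y)) ∧
      (g y).natDegree ≤ (r y - 1) / 2 := by
  induction y using WellFoundedLT.induction with
  | ind y ih =>
  by_cases hy : y = ⊥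
  · subst hy
    have : (Finset.univ.filter (fun z : α => z ≤ ⊥)) = {⊥} := by ext z; simp
    rw [this]
    simp [hg0, hr0]
  set Q : ℚ[X] := ∑ z : α with z < y, g z * (X - 1) ^ (r y - r z) with hQ
  have hQh : (X - 1) * (∑ z : α with z < y, g z * (X - 1) ^ (r y - r z - 1)) = Q := by
    rw [hQ, Finset.mul_sum]
    apply Finset.sum_congr rfl
    intro z hz
    have := hr (Finset.mem_filter.1 hz).2
    rw [mul_left_comm, ← pow_succ']
    congr 2
    omega
  have hsplit : ∑ z : α with z ≤ y, g z * (X - 1) ^ (r y - r z) = Q + g y := by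
    have : (Finset.univ.filter (fun z => z ≤ y)) = insert y (Finset.univ.filter (fun z => z < y)) := by
      ext z; simp [le_iff_eq_or_lt]
    rw [this, Finset.sum_insert (by simp)]
    simp [hQ, add_comm]
  have hinner : ∀ w, w < y → ∑ z : α with w ≤ z ∧ z < y, (-1 : ℚ[X]) ^ (r y - r z) = -1 := by
    intro w hw
    have h1 := hE w y hw
    have : (Finset.univ.filter (fun z => w ≤ z ∧ z ≤ y)) =
        insert y (Finset.univ.filter (fun z => w ≤ z ∧ z < y)) := by
      ext z; simp only [Finset.mem_filter, Finset.mem_univ, true_and, Finset.mem_insert, le_iff_eq_or_lt (b := y)]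
      constructor
      · rintro ⟨h, h' | h'⟩
        · exact Or.inl h'
        · exact Or.inr ⟨h, h'⟩
      · rintro (h | ⟨h, h'⟩)
        · subst h; exact ⟨hw.le, Or.inl rfl⟩
        · exact ⟨h, Or.inr h'⟩
    rw [this, Finset.sum_insert (by simp)] at h1
    have h2 : ∑ z : α with w ≤ z ∧ z < y, (-1 : ℚ[X]) ^ (r y - r z) =
        (-1) ^ (r y) * ∑ z : α with w ≤ z ∧ z < y, (-1 : ℚ[X]) ^ (r z) := by
      rw [Finset.mul_sum]
      apply Finset.sum_congr rfl
      intro z hz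
      exact neg_one_pow_sub (hr (Finset.mem_filter.1 hz).2.2).le
    rw [h2, eq_neg_of_add_eq_zero_right h1, mul_neg, ← pow_add, ← two_mul, pow_mul]
    simp
  have hanti : reflect (r y) Q = -Q := by
    have h1 : reflect (r y) Q = ∑ z : α with z < y, ∑ w : α with w ≤ z,
        g w * (X - 1) ^ (r y - r w) * (-1) ^ (r y - r z) := by
      rw [hQ, reflect_sum']
      apply Finset.sum_congr rfl
      intro z hz
      have hz' := (Finset.mem_filter.1 hz).2
      have hrz := hr hz'
      obtain ⟨i1, i2⟩ := ih z hz'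
      have : r y = r z + (r y - r z) := by omega
      conv_lhs => rw [this]
      rw [Nat.add_sub_cancel_left, reflect_mul _ _ (by omega) (natDegree_X_sub_one_pow _).le,
        reflect_X_sub_one_pow, ← i1, Finset.sum_mul]
      apply Finset.sum_congr rfl
      intro w hw
      have hrw := hr.monotone (Finset.mem_filter.1 hw).2
      have e1 : (1 - X : ℚ[X]) = (X - 1) * (-1) := by ring
      have e2 : r y - r w = (r z - r w) + (r y - r z) := by omega
      rw [e1, mul_pow, e2, pow_add]
      ring
    rw [h1, Finset.sum_comm' (t' := Finset.univ.filter (fun w => w < y))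
      (s' := fun w => Finset.univ.filter (fun z => w ≤ z ∧ z < y))]
    · rw [hQ, ← Finset.sum_neg_distrib]
      apply Finset.sum_congr rfl
      intro w hw
      rw [← Finset.mul_sum, hinner w (Finset.mem_filter.1 hw).2]
      ring
    · intro z w
      simp only [Finset.mem_filter, Finset.mem_univ, true_and]
      constructor
      · rintro ⟨h, h'⟩; exact ⟨⟨h', h⟩, lt_of_le_of_lt h' h⟩
      · rintro ⟨⟨h, h'⟩, _⟩; exact ⟨h', h⟩
  have hrpos : 0 < r y := by
    have := hr (bot_lt_iff_ne_bot.2 hy)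
    omega
  have hco : ∀ k, (g y).coeff k = if k ≤ (r y - 1) / 2 then - Q.coeff k else 0 := by
    intro k
    rw [hg y hy, coeff_truncG, hQh]
    have : ((r y : ℤ) - 1).toNat = r y - 1 := by omega
    rw [this]
  have hQa : ∀ i, Q.coeff (revAt (r y) i) = - Q.coeff i := by
    intro i
    rw [← coeff_reflect, hanti, coeff_neg]
  refine ⟨?_, ?_⟩
  · rw [hsplit]
    ext i
    rw [coeff_add, coeff_reflect]
    have hq := hQa i
    by_cases hi : i ≤ r y
    · rw [revAt_le hi] at hq ⊢
      rw [hco, hco]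
      rcases lt_trichotomy (2 * i) (r y) with h | h | h
      · rw [if_pos (by omega), if_neg (by omega)]; simp
      · rw [if_neg (by omega), if_neg (by omega)]
        have : r y - i = i := by omega
        rw [this] at hq
        linarith
      · rw [if_neg (by omega), if_pos (by omega), hq]; simp
    · have : revAt (r y) i = i := by
        rw [← revAtFun_eq, revAtFun, if_neg hi]
      rw [this] at hq ⊢
      have : Q.coeff i = 0 := by linarith
      rw [this, zero_add]
  · rw [natDegree_le_iff_coeff_eq_zero]
    intro k hk
    rw [hco, if_neg (by omega)]

theorem KL_middle [OrderBot α] [OrderTop α] (r : α → ℕ) (hr : StrictMono r) (hr0 : r ⊥ = 0)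
    (k : ℕ) (hrt : r ⊤ = 2 * k + 1)
    (hE : ∀ x y : α, x < y → ∑ z : α with x ≤ z ∧ z ≤ y, (-1 : ℚ[X]) ^ r z = 0)
    (g : α → ℚ[X]) (hg0 : g ⊥ = 1)
    (hg : ∀ y, y ≠ ⊥ → g y = truncG ((r y : ℤ) - 1)
      (∑ z : α with z < y, g z * (X - 1) ^ (r y - r z - 1)))
    (f : α → ℚ[X]) (hf0 : f ⊤ = 1)
    (hf : ∀ y, y ≠ ⊤ → f y = truncG (((2 * k + 1 - r y : ℕ) : ℤ) - 1)
      (∑ z : α with y < z, f z * (X - 1) ^ ((2 * k + 1 - r y) - (2 * k + 1 - r z) - 1))) :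
    (g ⊤).coeff k = (f ⊥).coeff k := by
  set n := 2 * k + 1 with hn
  have hrn : ∀ z, r z ≤ n := fun z => hrt ▸ hr.monotone le_top
  have G := KL_main r hr hr0 hE g hg0 hg
  have F := KL_main (α := αᵒᵈ) (fun z => n - r (OrderDual.ofDual z))
    (by
      intro a b h
      have h1 : r (OrderDual.ofDual b) < r (OrderDual.ofDual a) := hr h
      have := hrn (OrderDual.ofDual a)
      show n - _ < n - _
      omega)
    (by show n - r ⊤ = 0; omega)
    (by
      intro x y h
      have := hE (OrderDual.ofDual y) (OrderDual.ofDual x) h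
      have h2 : ∑ z : α with OrderDual.ofDual y ≤ z ∧ z ≤ OrderDual.ofDual x, (-1 : ℚ[X]) ^ (n - r z) = 0 := by
        rw [Finset.sum_congr rfl (fun z _ => neg_one_pow_sub (hrn z)), ← Finset.mul_sum, this,
          mul_zero]
      rw [← h2]
      apply Finset.sum_congr
      · ext z
        rw [Finset.mem_filter]
        refine Iff.trans ?_ (Finset.mem_filter (a := OrderDual.ofDual z)).symm
        simp only [Finset.mem_univ, true_and]
        exact and_comm
      · intro z _; rfl)
    (fun z => f (OrderDual.ofDual z)) hf0 (fun y hy => hf (OrderDual.ofDual y) hy)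
  have F1 : ∀ z, ∑ w : α with z ≤ w, f w * (X - 1) ^ (r w - r z) = reflect (n - r z) (f z) := by
    intro z
    refine Eq.trans ?_ (F (OrderDual.toDual z)).1
    apply Finset.sum_congr rfl
    intro w hw
    show _ = f w * (X - 1) ^ ((n - r z) - (n - r w))
    congr 2
    have := hrn w
    have := hr.monotone (Finset.mem_filter.1 hw).2
    omega
  have F2 : ∀ z, (f z).natDegree ≤ (n - r z - 1) / 2 := fun z => (F (OrderDual.toDual z)).2
  clear F
  set B : ℚ[X] := ∑ z : α, (-1) ^ (n - r z) * (g z * f z) with hB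
  have hBn : reflect n B = B := by
    have h1 : reflect n B = ∑ z : α, ∑ p : α × α with p.1 ≤ z ∧ z ≤ p.2,
        g p.1 * f p.2 * (X - 1) ^ (r p.2 - r p.1) * (-1) ^ (n - r z) := by
      rw [hB, reflect_sum']
      apply Finset.sum_congr rfl
      intro z _
      have e : (-1 : ℚ[X]) ^ (n - r z) = C ((-1) ^ (n - r z)) := by simp
      have hz := hrn z
      have e2 : n = r z + (n - r z) := by omega
      rw [e, reflect_C_mul]
      conv_lhs => rw [e2]
      rw [Nat.add_sub_cancel_left,
        reflect_mul _ _ (by have := (G z).2; omega) (by have := F2 z; omega), ← (G z).1, ← F1,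
        Finset.sum_mul_sum, ← Finset.sum_product', Finset.mul_sum]
      apply Finset.sum_congr
      · ext p; simp
      · intro p hp
        simp only [Finset.mem_filter, Finset.mem_univ, true_and] at hp
        have a1 := hr.monotone hp.1
        have a2 := hr.monotone hp.2
        have : r p.2 - r p.1 = (r z - r p.1) + (r p.2 - r z) := by omega
        rw [this, pow_add]
        ring
    rw [h1, Finset.sum_comm' (t' := Finset.univ.filter (fun p : α × α => p.1 ≤ p.2))
      (s' := fun p => Finset.univ.filter (fun z => p.1 ≤ z ∧ z ≤ p.2))]
    · have h2 : ∀ p ∈ Finset.univ.filter (fun p : α × α => p.1 ≤ p.2),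
        ∑ z : α with p.1 ≤ z ∧ z ≤ p.2,
          g p.1 * f p.2 * (X - 1) ^ (r p.2 - r p.1) * (-1) ^ (n - r z) =
        if p.1 = p.2 then (-1) ^ (n - r p.1) * (g p.1 * f p.1) else 0 := by
        rintro ⟨x, y⟩ hp
        simp only [Finset.mem_filter, Finset.mem_univ, true_and] at hp ⊢
        split_ifs with hxy
        · subst hxy
          have : (Finset.univ.filter (fun z => x ≤ z ∧ z ≤ x)) = {x} := by
            ext z
            simp only [Finset.mem_filter, Finset.mem_univ, true_and, Finset.mem_singleton]
            exact ⟨fun h => le_antisymm h.2 h.1, fun h => by subst h; simp⟩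
          rw [this]
          simp
          ring
        · rw [← Finset.mul_sum, Finset.sum_congr rfl (fun z _ => neg_one_pow_sub (hrn z)),
            ← Finset.mul_sum, hE x y (lt_of_le_of_ne hp hxy)]
          simp
      rw [Finset.sum_congr rfl h2, ← Finset.sum_filter]
      rw [hB]
      symm
      apply Finset.sum_bij (fun z _ => (z, z))
      · intro z _; simp
      · intro a _ b _ h; exact (Prod.ext_iff.1 h).1
      · rintro ⟨x, y⟩ h
        simp only [Finset.mem_filter] at h
        exact ⟨x, Finset.mem_univ _, by simp [h.2]⟩
      · intro z _; rfl
    · intro z p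
      simp only [Finset.mem_filter, Finset.mem_univ, true_and]
      constructor
      · intro h; exact ⟨h, h.1.trans h.2⟩
      · intro h; exact h.1
  have hdeg : ∀ z, ((-1 : ℚ[X]) ^ (n - r z) * (g z * f z)).natDegree ≤
      (r z - 1) / 2 + (n - r z - 1) / 2 := by
    intro z
    have e : (-1 : ℚ[X]) ^ (n - r z) = C ((-1) ^ (n - r z)) := by simp
    rw [e]
    refine (natDegree_C_mul_le _ _).trans (natDegree_mul_le.trans ?_)
    exact Nat.add_le_add (G z).2 (F2 z)
  have hBk1 : B.coeff (k + 1) = 0 := by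
    rw [hB, finsetSum_coeff]
    apply Finset.sum_eq_zero
    intro z _
    apply coeff_eq_zero_of_natDegree_lt
    refine lt_of_le_of_lt (hdeg z) ?_
    have := hrn z
    omega
  have hBk : B.coeff k = 0 := by
    have : B.coeff k = (reflect n B).coeff (k + 1) := by
      rw [coeff_reflect, revAt_le (by omega)]
      congr 1
      omega
    rw [this, hBn, hBk1]
  have hbt : (⊥ : α) ≠ ⊤ := by
    intro h
    rw [h, hrt] at hr0
    omega
  rw [hB, finsetSum_coeff, ← Finset.sum_subset (Finset.subset_univ {⊥, ⊤}),
    Finset.sum_pair hbt] at hBk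
  · rw [hr0, hrt, hg0, hf0] at hBk
    have e : (-1 : ℚ[X]) ^ (n - 0) = -1 := by
      rw [hn]; exact Odd.neg_one_pow ⟨k, by omega⟩
    rw [e] at hBk
    simp at hBk
    linarith
  · intro z _ hz
    simp only [Finset.mem_insert, Finset.mem_singleton, not_or] at hz
    apply coeff_eq_zero_of_natDegree_lt
    refine lt_of_le_of_lt (hdeg z) ?_
    have h1 := hr (bot_lt_iff_ne_bot.2 hz.1)
    have h2 := hr (lt_top_iff_ne_top.2 hz.2)
    omega

end Comb

section Bridge

variable {V : Type} [AddCommGroup V] [Module ℝ V]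
variable {α : Type} [Fintype α] [PartialOrder α] [OrderBot α]

lemma pdim_empty : pdim (∅ : Set V) = -1 := by simp [pdim]

lemma truncG_neg_one_one : truncG (-1) (1 : ℚ[X]) = 1 := by
  simp [truncG]

theorem bridge (r : α → ℕ) (hr : StrictMono r) (Φ : α → Set V) (hinj : Function.Injective Φ)
    (hbot : Φ ⊥ = ∅) (hdim : ∀ y, pdim (Φ y) = (r y : ℤ) - 1)
    (hface : ∀ y G, IsFace (Φ y) G ↔ ∃ z, z ≤ y ∧ Φ z = G) :
    r ⊥ = 0 ∧ toricG (Φ ⊥) = 1 ∧ ∀ y, y ≠ ⊥ → toricG (Φ y) = truncG ((r y : ℤ) - 1)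
      (∑ z : α with z < y, toricG (Φ z) * (X - 1) ^ (r y - r z - 1)) := by
  have hr0 : r ⊥ = 0 := by
    have := hdim ⊥
    rw [hbot, pdim_empty] at this
    omega
  have hunf : ∀ m y, y ≠ ⊥ → relHAux (m + 1) ∅ (Φ y) = ∑ z : α with z < y,
      truncG ((r z : ℤ) - 1) (relHAux m ∅ (Φ z)) * (X - 1) ^ (r y - r z - 1) := by
    intro m y hy
    have hne : Φ y ≠ ∅ := by rw [← hbot]; exact fun h => hy (hinj h)
    rw [relHAux, if_neg hne]
    have hset : {G' : Set V | IsFace (Φ y) G' ∧ ∅ ⊆ G' ∧ G' ≠ Φ y} =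
        Φ '' ((Finset.univ.filter (fun z => z < y) : Finset α) : Set α) := by
      ext G
      simp only [Set.mem_ofPred_eq, hface, Set.mem_image, Finset.coe_filter, Finset.mem_univ,
        true_and, Set.empty_subset]
      constructor
      · rintro ⟨⟨z, hz, rfl⟩, hne⟩
        exact ⟨z, lt_of_le_of_ne hz (fun h => hne (by rw [h])), rfl⟩
      · rintro ⟨z, hz, rfl⟩
        exact ⟨⟨z, hz.le, rfl⟩, fun h => hz.ne (hinj h)⟩
    rw [hset, finsum_mem_image hinj.injOn, finsum_mem_coe_finset]
    apply Finset.sum_congr rfl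
    intro z hz
    rw [hdim, hdim, pdim_empty]
    have h1 : (r z : ℤ) - 1 - -1 - 1 = (r z : ℤ) - 1 := by ring
    have h2 : ((r y : ℤ) - 1 - ((r z : ℤ) - 1) - 1).toNat = r y - r z - 1 := by omega
    rw [h1, h2]
  have hbot1 : ∀ m, relHAux m ∅ (Φ ⊥) = 1 := by
    intro m
    rcases m with _ | m
    · rfl
    · rw [relHAux, if_pos hbot]
  have hstab : ∀ m y, r y ≤ m → relHAux m ∅ (Φ y) = relHAux (r y) ∅ (Φ y) := by
    intro m
    induction m using Nat.strong_induction_on with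
    | _ m ih =>
    intro y hy
    by_cases hyb : y = ⊥
    · subst hyb; rw [hbot1, hbot1]
    have hpos : 0 < r y := by have := hr (bot_lt_iff_ne_bot.2 hyb); omega
    obtain ⟨m, rfl⟩ : ∃ m', m = m' + 1 := ⟨m - 1, by omega⟩
    obtain ⟨s, hs⟩ : ∃ s, r y = s + 1 := ⟨r y - 1, by omega⟩
    conv_rhs => rw [hs]
    rw [hunf m y hyb, hunf s y hyb]
    apply Finset.sum_congr rfl
    intro z hz
    have hz' := hr (Finset.mem_filter.1 hz).2
    rw [ih m (by omega) z (by omega), ih s (by omega) z (by omega)]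
  have htor : ∀ y, toricG (Φ y) = truncG ((r y : ℤ) - 1) (relHAux (r y) ∅ (Φ y)) := by
    intro y
    unfold toricG relG relH
    rw [hdim, pdim_empty]
    congr 1
    · ring
    · congr 1; omega
  refine ⟨hr0, ?_, ?_⟩
  · rw [htor, hbot1, hr0]
    simpa using truncG_neg_one_one
  · intro y hy
    have hpos : 0 < r y := by have := hr (bot_lt_iff_ne_bot.2 hy); omega
    obtain ⟨s, hs⟩ : ∃ s, r y = s + 1 := ⟨r y - 1, by omega⟩
    rw [htor]
    congr 1
    conv_lhs => rw [hs]
    rw [hunf s y hy]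
    apply Finset.sum_congr rfl
    intro z hz
    have hz' := hr (Finset.mem_filter.1 hz).2
    rw [htor, hstab s z (by omega)]

end Bridge

section Geom

lemma pdim_add_one {V : Type} [AddCommGroup V] [Module ℝ V] [FiniteDimensional ℝ V] (S : Set V) :
    pdim S + 1 = Module.finrank ℝ (Submodule.span ℝ ((fun x => ((1 : ℝ), x)) '' S)) := by
  rcases S.eq_empty_or_nonempty with rfl | ⟨p, hp⟩
  · rw [Set.image_empty, Submodule.span_empty, finrank_bot]; simp [pdim]
  have hne : S ≠ ∅ := fun h => by simp [h] at hp
  set M := Submodule.span ℝ ((fun x => ((1 : ℝ), x)) '' S) with hM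
  rw [pdim, if_neg hne, direction_affineSpan]
  have h1 := LinearMap.finrank_range_add_finrank_ker ((LinearMap.fst ℝ ℝ V).domRestrict M)
  have hpM : ((1 : ℝ), p) ∈ M := Submodule.subset_span ⟨p, hp, rfl⟩
  have hrange : LinearMap.range ((LinearMap.fst ℝ ℝ V).domRestrict M) = ⊤ := by
    rw [LinearMap.range_eq_top]
    intro c
    exact ⟨c • ⟨_, hpM⟩, by simp⟩
  rw [hrange, finrank_top, Module.finrank_self] at h1
  have hx : ∀ x ∈ M, x.2 - x.1 • p ∈ vectorSpan ℝ S := by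
    intro x hx
    induction hx using Submodule.span_induction with
    | mem x hx =>
      obtain ⟨y, hy, rfl⟩ := hx
      simpa using vsub_mem_vectorSpan ℝ hy hp
    | zero => simp
    | add a b _ _ ha hb =>
      convert add_mem ha hb using 1
      simp only [Prod.fst_add, Prod.snd_add]; module
    | smul c a _ ha =>
      convert Submodule.smul_mem _ c ha using 1
      simp only [Prod.smul_fst, Prod.smul_snd, smul_eq_mul]; module
  have hker : (LinearMap.ker ((LinearMap.fst ℝ ℝ V).domRestrict M)).map M.subtype =
      (vectorSpan ℝ S).map (LinearMap.inr ℝ ℝ V) := by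
    ext ⟨c, x⟩
    constructor
    · rintro ⟨⟨y, hy⟩, h0, he⟩
      have h0' : y.1 = 0 := h0
      have he' : y = (c, x) := he
      subst he'
      simp only at h0'
      subst h0'
      refine ⟨x, ?_, rfl⟩
      simpa using hx _ hy
    · rintro ⟨y, hy, he⟩
      have : (0 : ℝ) = c ∧ y = x := by simpa using he
      obtain ⟨rfl, rfl⟩ := this
      have hmem : ((0 : ℝ), y) ∈ M := by
        have hle : vectorSpan ℝ S ≤ M.comap (LinearMap.inr ℝ ℝ V) := by
          rw [vectorSpan_eq_span_vsub_set_right ℝ hp, Submodule.span_le]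
          rintro _ ⟨z, hz, rfl⟩
          have := sub_mem (Submodule.subset_span ⟨z, hz, rfl⟩ : ((1 : ℝ), z) ∈ M) hpM
          simpa using this
        exact hle hy
      exact ⟨⟨_, hmem⟩, rfl, rfl⟩
  have h2 : Module.finrank ℝ (LinearMap.ker ((LinearMap.fst ℝ ℝ V).domRestrict M)) =
      Module.finrank ℝ (vectorSpan ℝ S) := by
    rw [← Submodule.finrank_map_subtype_eq, hker]
    exact (Submodule.equivMapOfInjective _ LinearMap.inr_injective _).finrank_eq.symm
  rw [← h1, h2]
  push_cast
  ring

variable {ι : Type} [Fintype ι] {V : Type} [AddCommGroup V] [Module ℝ V]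

def lft (v : ι → V) : ι → ℝ × V := fun i => (1, v i)

lemma pdim_hull [FiniteDimensional ℝ V] (v : ι → V) (K : Set ι) :
    pdim (convexHull ℝ (v '' K)) = (rkF (lft v) K : ℤ) - 1 := by
  have h := pdim_add_one (convexHull ℝ (v '' K))
  have : Submodule.span ℝ ((fun x => ((1 : ℝ), x)) '' (convexHull ℝ (v '' K))) =
      Submodule.span ℝ (lft v '' K) := by
    apply le_antisymm
    · rw [Submodule.span_le]
      rintro _ ⟨x, hx, rfl⟩
      have hle : convexHull ℝ (v '' K) ⊆ {x | ((1 : ℝ), x) ∈ Submodule.span ℝ (lft v '' K)} := by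
        apply convexHull_min
        · rintro _ ⟨i, hi, rfl⟩
          exact Submodule.subset_span ⟨i, hi, rfl⟩
        · intro x hx y hy a b ha hb hab
          have hx' : ((1 : ℝ), x) ∈ Submodule.span ℝ (lft v '' K) := hx
          have hy' : ((1 : ℝ), y) ∈ Submodule.span ℝ (lft v '' K) := hy
          have := add_mem (Submodule.smul_mem _ a hx') (Submodule.smul_mem _ b hy')
          simpa [hab] using this
      exact hle hx
    · apply Submodule.span_mono
      rintro _ ⟨i, hi, rfl⟩
      exact ⟨v i, subset_convexHull _ _ ⟨i, hi, rfl⟩, rfl⟩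
  rw [this] at h
  rw [rkF]
  omega

lemma argmax_hull (v : ι → V) (K : Set ι) (L : V →ₗ[ℝ] ℝ) :
    {x | x ∈ convexHull ℝ (v '' K) ∧ ∀ y ∈ convexHull ℝ (v '' K), L y ≤ L x} =
      convexHull ℝ (v '' {i | i ∈ K ∧ ∀ j ∈ K, L (v j) ≤ L (v i)}) := by
  rcases K.eq_empty_or_nonempty with rfl | hK
  · simp
  obtain ⟨m, hm, hmax⟩ := Set.exists_max_image K (fun i => L (v i)) (Set.toFinite K) hK
  set K' := {i | i ∈ K ∧ ∀ j ∈ K, L (v j) ≤ L (v i)} with hK'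
  have hle : ∀ y ∈ convexHull ℝ (v '' K), L y ≤ L (v m) := by
    have : convexHull ℝ (v '' K) ⊆ {y | L y ≤ L (v m)} := by
      apply convexHull_min
      · rintro _ ⟨i, hi, rfl⟩; exact hmax i hi
      · exact convex_halfSpace_le L.isLinear _
    exact this
  have heq : ∀ y ∈ convexHull ℝ (v '' K'), L y = L (v m) := by
    have : convexHull ℝ (v '' K') ⊆ {y | L y = L (v m)} := by
      apply convexHull_min
      · rintro _ ⟨i, hi, rfl⟩; exact le_antisymm (hmax i hi.1) (hi.2 m hm)
      · exact convex_hyperplane L.isLinear _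
    exact this
  have hsub : convexHull ℝ (v '' K') ⊆ convexHull ℝ (v '' K) :=
    convexHull_mono (Set.image_mono fun i hi => hi.1)
  have hor : convexHull ℝ (v '' K) ⊆ {x | L x < L (v m) ∨ x ∈ convexHull ℝ (v '' K')} := by
    apply convexHull_min
    · rintro _ ⟨i, hi, rfl⟩
      rcases (hmax i hi).lt_or_eq with h | h
      · exact Or.inl h
      · exact Or.inr (subset_convexHull _ _ ⟨i, ⟨hi, fun j hj => (hmax j hj).trans h.ge⟩, rfl⟩)
    · intro x hx y hy a b ha hb hab
      have hxle : L x ≤ L (v m) := by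
        rcases hx with h | h
        · exact h.le
        · exact (heq x h).le
      have hyle : L y ≤ L (v m) := by
        rcases hy with h | h
        · exact h.le
        · exact (heq y h).le
      rcases ha.eq_or_lt with h0 | h0
      · have : b = 1 := by linarith
        subst h0; subst this; simpa using hy
      rcases hb.eq_or_lt with h1 | h1
      · have : a = 1 := by linarith
        subst h1; subst this; simpa using hx
      by_cases hc : x ∈ convexHull ℝ (v '' K') ∧ y ∈ convexHull ℝ (v '' K')
      · exact Or.inr (convex_convexHull ℝ _ hc.1 hc.2 ha hb hab)
      · left
        simp only [map_add, map_smul, smul_eq_mul]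
        have hb' : b = 1 - a := by linarith
        have : L x < L (v m) ∨ L y < L (v m) := by
          rcases hx with h | h
          · exact Or.inl h
          · rcases hy with h' | h'
            · exact Or.inr h'
            · exact absurd ⟨h, h'⟩ hc
        rcases this with h | h
        · have e1 := mul_lt_mul_of_pos_left h h0
          have e2 := mul_le_mul_of_nonneg_left hyle hb
          calc _ < a * L (v m) + b * L (v m) := by linarith
            _ = L (v m) := by rw [← add_mul, hab, one_mul]
        · have e1 := mul_lt_mul_of_pos_left h h1
          have e2 := mul_le_mul_of_nonneg_left hxle ha
          calc _ < a * L (v m) + b * L (v m) := by linarith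
            _ = L (v m) := by rw [← add_mul, hab, one_mul]
  ext x
  constructor
  · rintro ⟨hx, hxm⟩
    rcases hor hx with h | h
    · exact absurd (hxm (v m) (subset_convexHull _ _ ⟨m, hm, rfl⟩)) (not_le.2 h)
    · exact h
  · intro hx
    refine ⟨hsub hx, fun y hy => ?_⟩
    rw [heq x hx]
    exact hle y hy

lemma isF_empty (v : ι → V) : IsF (lft v) ∅ :=
  ⟨LinearMap.fst ℝ ℝ V, fun i => by simp [lft], fun i => by simp [lft]⟩

lemma isF_univ (v : ι → V) : IsF (lft v) Set.univ :=
  ⟨0, fun i => by simp, fun i => by simp⟩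

lemma face_hull (v : ι → V) {K : Set ι} (hK : IsF (lft v) K) (G : Set V) :
    IsFace (convexHull ℝ (v '' K)) G ↔
      ∃ K', IsF (lft v) K' ∧ K' ⊆ K ∧ convexHull ℝ (v '' K') = G := by
  constructor
  · rintro (rfl | rfl | ⟨L, rfl⟩)
    · exact ⟨K, hK, subset_rfl, rfl⟩
    · exact ⟨∅, isF_empty v, Set.empty_subset _, by simp⟩
    · refine ⟨_, ?_, ?_, (argmax_hull v K L).symm⟩
      · apply isF_of_cell _ hK (fun i hi => hi.1)
        rcases K.eq_empty_or_nonempty with rfl | hKn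
        · exact ⟨0, by simp [cellF]⟩
        obtain ⟨m, hm, hmax⟩ := Set.exists_max_image K (fun i => L (v i)) (Set.toFinite K) hKn
        refine ⟨L (v m) • LinearMap.fst ℝ ℝ V - L ∘ₗ LinearMap.snd ℝ ℝ V, ?_, ?_⟩
        · rintro i ⟨hi, h⟩
          have := le_antisymm (hmax i hi) (h m hm)
          simp [lft, this]
        · intro j hj hjK
          simp only [lft, LinearMap.sub_apply, LinearMap.smul_apply, LinearMap.fst_apply,
            LinearMap.comp_apply, LinearMap.snd_apply, smul_eq_mul, mul_one, sub_pos]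
          by_contra h
          exact hjK ⟨hj, fun i hi => (hmax i hi).trans (not_lt.1 h)⟩
      · exact fun i hi => hi.1
  · rintro ⟨K', ⟨l, h1, h2⟩, hsub, rfl⟩
    rcases K'.eq_empty_or_nonempty with rfl | ⟨m, hm⟩
    · right; left; simp
    · right; right
      refine ⟨-(l ∘ₗ LinearMap.inr ℝ ℝ V), ?_⟩
      rw [argmax_hull]
      have hl : ∀ i, l (lft v i) = l (1, 0) + l (0, v i) := by
        intro i; rw [← map_add]; simp [lft]
      congr 2
      ext i
      constructor
      · intro hi
        refine ⟨hsub hi, fun j _ => ?_⟩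
        have a := h1 j
        have b := (h2 i).2 hi
        rw [hl] at a b
        simp
        linarith
      · rintro ⟨_, hi⟩
        rw [← h2]
        have a := hi m (hsub hm)
        have b := (h2 m).2 hm
        have c := h1 i
        rw [hl] at b c ⊢
        simp at a
        linarith

lemma hull_inj_aux (v : ι → V) {K : Set ι} (hK : IsF (lft v) K) (i : ι)
    (hi : v i ∈ convexHull ℝ (v '' K)) : i ∈ K := by
  obtain ⟨l, h1, h2⟩ := hK
  have : convexHull ℝ (v '' K) ⊆ {x | l (1, x) = 0} := by
    apply convexHull_min
    · rintro _ ⟨j, hj, rfl⟩; exact (h2 j).2 hj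
    · intro x hx y hy a b ha hb hab
      have e : ((1 : ℝ), a • x + b • y) = a • ((1 : ℝ), x) + b • ((1 : ℝ), y) := by
        simp [hab]
      have hx' : l (1, x) = 0 := hx
      have hy' : l (1, y) = 0 := hy
      show l _ = 0
      rw [e, map_add, map_smul, map_smul, hx', hy']; simp
  exact (h2 i).1 (this hi)

end Geom

section Polar

variable {ι : Type} [Fintype ι] {n : ℕ}

/-- the standard pairing on `ℝ × ℝ^n` -/
noncomputable def pairing (n : ℕ) : (ℝ × (Fin n → ℝ)) →ₗ[ℝ] Module.Dual ℝ (ℝ × (Fin n → ℝ)) :=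
  LinearMap.mk₂ ℝ (fun p q => p.1 * q.1 + ∑ j, q.2 j * p.2 j)
    (by intro a b c; simp [mul_add, add_mul, Finset.sum_add_distrib]; ring)
    (by intro a b c; simp only [Prod.smul_fst, Prod.smul_snd, Pi.smul_apply, smul_eq_mul, mul_add, Finset.mul_sum]
        congr 1
        · ring
        · exact Finset.sum_congr rfl fun j _ => by ring)
    (by intro a b c; simp [mul_add, add_mul, Finset.sum_add_distrib]; ring)
    (by intro a b c; simp only [Prod.smul_fst, Prod.smul_snd, Pi.smul_apply, smul_eq_mul, mul_add, Finset.mul_sum]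
        congr 1
        · ring
        · exact Finset.sum_congr rfl fun j _ => by ring)

lemma pairing_apply (p q : ℝ × (Fin n → ℝ)) :
    pairing n p q = p.1 * q.1 + ∑ j, q.2 j * p.2 j := rfl

lemma pairing_inj : Function.Injective (pairing n) := by
  rw [← LinearMap.ker_eq_bot, LinearMap.ker_eq_bot']
  rintro ⟨c, w⟩ h
  have h1 := LinearMap.congr_fun h (1, 0)
  have h2 := LinearMap.congr_fun h (0, w)
  simp [pairing_apply] at h1 h2
  have h3 := (Finset.sum_eq_zero_iff_of_nonneg (fun j _ => mul_self_nonneg (w j))).1 h2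
  ext j
  · simpa using h1
  · simpa using h3 j (Finset.mem_univ _)

lemma pairing_surj : Function.Surjective (pairing n) :=
  (LinearMap.injective_iff_surjective_of_finrank_eq_finrank
    (Subspace.dual_finrank_eq (K := ℝ)).symm).1 pairing_inj

def Pol (v : ι → Fin n → ℝ) (K : Set ι) : Set (Fin n → ℝ) :=
  {w | (∀ i, 0 ≤ pairing n (1, w) (lft v i)) ∧ ∀ i ∈ K, pairing n (1, w) (lft v i) = 0}

lemma pairing_lft (v : ι → Fin n → ℝ) (w : Fin n → ℝ) (i : ι) :
    pairing n (1, w) (lft v i) = 1 + ∑ j, v i j * w j := by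
  simp [pairing_apply, lft]

lemma polarSet_eq (v : ι → Fin n → ℝ) :
    polarSet (convexHull ℝ (v '' Set.univ)) = Pol v ∅ := by
  ext w
  simp only [polarSet, Pol, Set.mem_ofPred_eq, pairing_lft, Set.mem_empty_iff_false, false_imp_iff,
    implies_true, and_true]
  constructor
  · intro h i
    have := h (v i) (subset_convexHull _ _ ⟨i, trivial, rfl⟩)
    linarith
  · intro h x hx
    have : convexHull ℝ (v '' Set.univ) ⊆ {x | -1 ≤ ∑ j, x j * w j} := by
      apply convexHull_min
      · rintro _ ⟨i, _, rfl⟩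
        have := h i
        simp only [Set.mem_ofPred_eq]
        linarith
      · have : IsLinearMap ℝ (fun x : Fin n → ℝ => ∑ j, x j * w j) := by
          constructor
          · intro x y; simp [add_mul, Finset.sum_add_distrib]
          · intro c x; simp [Finset.mul_sum, mul_assoc]
        exact convex_halfSpace_ge this _
    exact this hx

/-- consequence of `0` being interior -/
def PosH (v : ι → Fin n → ℝ) : Prop :=
  ∀ l : Module.Dual ℝ (ℝ × (Fin n → ℝ)), (∀ i, 0 ≤ l (lft v i)) → l (1, 0) ≤ 0 → l = 0

lemma posH_of_interior (v : ι → Fin n → ℝ)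
    (h0 : (0 : Fin n → ℝ) ∈ interior (convexHull ℝ (v '' Set.univ))) : PosH v := by
  intro l hl hc
  have hP : ∀ x ∈ convexHull ℝ (v '' Set.univ), 0 ≤ l (1, x) := by
    have : convexHull ℝ (v '' Set.univ) ⊆ {x | 0 ≤ l (1, x)} := by
      apply convexHull_min
      · rintro _ ⟨i, _, rfl⟩; exact hl i
      · intro x hx y hy a b ha hb hab
        have e : ((1 : ℝ), a • x + b • y) = a • ((1 : ℝ), x) + b • ((1 : ℝ), y) := by
          simp [hab]
        have hx' : 0 ≤ l (1, x) := hx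
        have hy' : 0 ≤ l (1, y) := hy
        show 0 ≤ l _
        rw [e, map_add, map_smul, map_smul, smul_eq_mul, smul_eq_mul]
        positivity
    exact this
  have hsplit : ∀ x, l (1, x) = l (1, 0) + l (0, x) := by
    intro x; rw [← map_add]; simp
  have hge : ∀ x, 0 ≤ l (0, x) := by
    intro x
    have hc : Filter.Tendsto (fun e : ℝ => e • x) (nhds 0) (nhds ((0 : ℝ) • x)) :=
      Continuous.tendsto (by fun_prop) 0
    rw [zero_smul] at hc
    have hev : ∀ᶠ e in nhds (0:ℝ), e • x ∈ convexHull ℝ (v '' Set.univ) :=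
      hc.eventually (mem_interior_iff_mem_nhds.1 h0)
    obtain ⟨e, he, hepos⟩ := ((hev.filter_mono
      (nhdsWithin_le_nhds (s := Set.Ioi 0))).and self_mem_nhdsWithin).exists
    have hepos' : 0 < e := hepos
    have h1 := hP _ he
    rw [hsplit] at h1
    have h2 : l (0, e • x) = e * l (0, x) := by
      rw [← smul_eq_mul, ← map_smul]; simp
    rw [h2] at h1
    by_contra hneg
    have := mul_neg_of_pos_of_neg hepos' (not_le.1 hneg)
    linarith
  have hz : ∀ x, l (0, x) = 0 := by
    intro x
    have h1 := hge x
    have h2 := hge (-x)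
    have : l (0, -x) = - l (0, x) := by rw [← map_neg]; simp
    linarith
  have hc0 : l (1, 0) = 0 := by
    have := hP 0 (interior_subset h0)
    linarith
  ext x
  · simpa using hc0
  · simpa using hz _

variable (v : ι → Fin n → ℝ) (hv : PosH v)
include hv

lemma pol_span {K : Set ι} {l : Module.Dual ℝ (ℝ × (Fin n → ℝ))} (h1 : ∀ i, 0 ≤ l (lft v i))
    (h2 : ∀ i ∈ K, l (lft v i) = 0) :
    l = 0 ∨ ∃ c : ℝ, 0 < c ∧ ∃ w ∈ Pol v K, l = c • pairing n (1, w) := by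
  by_cases hc : l (1, 0) ≤ 0
  · exact Or.inl (hv l h1 hc)
  right
  push Not at hc
  obtain ⟨⟨c, w⟩, rfl⟩ := pairing_surj l
  have hcc : 0 < c := by simpa [pairing_apply] using hc
  have e : pairing n (c, w) = c • pairing n (1, c⁻¹ • w) := by
    rw [← map_smul]; congr 1; simp [hcc.ne', smul_smul]
  refine ⟨c, hcc, c⁻¹ • w, ⟨fun i => ?_, fun i hi => ?_⟩, e⟩
  · have := h1 i
    rw [e, LinearMap.smul_apply, smul_eq_mul] at this
    exact nonneg_of_mul_nonneg_right this hcc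
  · have := h2 i hi
    rw [e, LinearMap.smul_apply, smul_eq_mul] at this
    exact (mul_eq_zero.1 this).resolve_left hcc.ne'

lemma pdim_pol {K : Set ι} (hK : IsF (lft v) K) :
    pdim (Pol v K) = (n : ℤ) - rkF (lft v) K := by
  have h := pdim_add_one (Pol v K)
  have hr := rkF_add (lft v) K
  have hfr : Module.finrank ℝ (ℝ × (Fin n → ℝ)) = n + 1 := by simp [add_comm]
  rw [hfr] at hr
  set M := Submodule.span ℝ ((fun x => ((1 : ℝ), x)) '' Pol v K) with hM
  have hmap : M.map (pairing n) = (Submodule.span ℝ (lft v '' K)).dualAnnihilator := by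
    apply le_antisymm
    · rw [Submodule.map_le_iff_le_comap, Submodule.span_le]
      rintro _ ⟨w, hw, rfl⟩
      exact (mem_annF _ _ _).2 hw.2
    · intro m hm
      rw [mem_annF] at hm
      have hZ : ∀ l : Module.Dual ℝ (ℝ × (Fin n → ℝ)), (∀ i, 0 ≤ l (lft v i)) →
          (∀ i ∈ K, l (lft v i) = 0) → l ∈ M.map (pairing n) := by
        intro l h1 h2
        rcases pol_span v hv h1 h2 with rfl | ⟨c, _, w, hw, rfl⟩
        · exact zero_mem _
        · exact Submodule.smul_mem _ _ ⟨_, Submodule.subset_span ⟨w, hw, rfl⟩, rfl⟩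
      obtain ⟨l, hl1, hl2⟩ := hK
      have hlc : l ∈ cellF (lft v) Set.univ K :=
        ⟨fun i hi => (hl2 i).2 hi, fun j _ hj =>
          lt_of_le_of_ne (hl1 j) (fun h => hj ((hl2 j).1 h.symm))⟩
      obtain ⟨e, he, hstep⟩ := cellF_step _ _ _ hlc hm
      have a1 := hZ l hl1 hlc.1
      have a2 := hZ (l + e • m) (fun i => by
        by_cases hi : i ∈ K
        · exact (hstep.1 i hi).ge
        · exact (hstep.2 i trivial hi).le) hstep.1
      have a3 := sub_mem a2 a1
      rw [add_sub_cancel_left] at a3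
      exact (Submodule.smul_mem_iff _ he.ne').1 a3
  have hfin : Module.finrank ℝ M =
      Module.finrank ℝ (Submodule.span ℝ (lft v '' K)).dualAnnihilator := by
    rw [← hmap]
    exact (Submodule.equivMapOfInjective _ pairing_inj _).finrank_eq
  omega

lemma pol_univ : Pol v Set.univ = ∅ := by
  ext w
  simp only [Set.mem_empty_iff_false, iff_false]
  intro hw
  have := hv (-pairing n (1, w)) (fun i => by
    rw [LinearMap.neg_apply, hw.2 i trivial]; simp) (by simp [pairing_apply])
  have := LinearMap.congr_fun this (1, 0)
  simp [pairing_apply] at this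

lemma pol_inj_aux {K K' : Set ι} (hK : IsF (lft v) K) (h : Pol v K ⊆ Pol v K') : K' ⊆ K := by
  obtain ⟨l, h1, h2⟩ := hK
  intro i hi
  rw [← h2]
  rcases pol_span v hv h1 (fun i hi => (h2 i).2 hi) with rfl | ⟨c, _, w, hw, rfl⟩
  · simp
  · simp [(h hw).2 i hi]

lemma pol_convex_comb {w x : Fin n → ℝ} {a b : ℝ} (hab : a + b = 1) (i : ι) :
    pairing n (1, a • w + b • x) (lft v i) =
      a * pairing n (1, w) (lft v i) + b * pairing n (1, x) (lft v i) := by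
  have e : ((1 : ℝ), a • w + b • x) = a • ((1 : ℝ), w) + b • ((1 : ℝ), x) := by
    simp [hab]
  rw [e, map_add, map_smul, map_smul]; rfl

lemma face_pol {K : Set ι} (hK : IsF (lft v) K) (G : Set (Fin n → ℝ)) :
    IsFace (Pol v K) G ↔ ∃ K', IsF (lft v) K' ∧ K ⊆ K' ∧ Pol v K' = G := by
  constructor
  · rintro (rfl | rfl | ⟨L, hG⟩)
    · exact ⟨K, hK, subset_rfl, rfl⟩
    · exact ⟨Set.univ, isF_univ v, Set.subset_univ _, pol_univ v hv⟩
    · rcases G.eq_empty_or_nonempty with rfl | ⟨w0, hw0⟩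
      · exact ⟨Set.univ, isF_univ v, Set.subset_univ _, pol_univ v hv⟩
      let tight : (Fin n → ℝ) → Set ι := fun w => {i | pairing n (1, w) (lft v i) = 0}
      obtain ⟨T, ⟨w, hw, rfl⟩, hmin⟩ := (wellFounded_lt (α := Set ι)).has_min (tight '' G)
        ⟨_, w0, hw0, rfl⟩
      have hGmem : ∀ x, x ∈ G ↔ x ∈ Pol v K ∧ ∀ y ∈ Pol v K, L y ≤ L x := by
        intro x; rw [hG]; rfl
      have hwG := (hGmem w).1 hw
      have htight : ∀ x ∈ G, tight w ⊆ tight x := by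
        intro x hx
        have hxG := (hGmem x).1 hx
        have hhalf : (1 / 2 : ℝ) + 1 / 2 = 1 := by norm_num
        set y := (1 / 2 : ℝ) • w + (1 / 2 : ℝ) • x with hy
        have hyP : ∀ i, pairing n (1, y) (lft v i) =
            1 / 2 * pairing n (1, w) (lft v i) + 1 / 2 * pairing n (1, x) (lft v i) :=
          fun i => pol_convex_comb v hv hhalf i
        have hyK : y ∈ Pol v K := by
          refine ⟨fun i => ?_, fun i hi => ?_⟩
          · rw [hyP]
            have := hwG.1.1 i
            have := hxG.1.1 i
            linarith
          · rw [hyP, hwG.1.2 i hi, hxG.1.2 i hi]; simp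
        have hyG : y ∈ G := by
          rw [hGmem]
          refine ⟨hyK, fun z hz => ?_⟩
          have a1 := hwG.2 z hz
          have a2 := hxG.2 z hz
          rw [hy, map_add, map_smul, map_smul, smul_eq_mul, smul_eq_mul]
          linarith
        have hsubw : tight y ⊆ tight w ∧ tight y ⊆ tight x := by
          constructor
          all_goals
            intro i hi
            have hi' : pairing n (1, y) (lft v i) = 0 := hi
            rw [hyP] at hi'
            have := hwG.1.1 i
            have := hxG.1.1 i
            simp only [tight, Set.mem_ofPred_eq]
            linarith
        have hnot := hmin (tight y) ⟨y, hyG, rfl⟩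
        have heq : tight y = tight w := by
          by_contra hne
          exact hnot (lt_of_le_of_ne hsubw.1 hne)
        rw [← heq]
        exact hsubw.2
      refine ⟨tight w, ⟨pairing n (1, w), hwG.1.1, fun i => Iff.rfl⟩, fun i hi => hwG.1.2 i hi, ?_⟩
      have hKt : K ⊆ tight w := fun i hi => hwG.1.2 i hi
      ext x
      constructor
      · intro hx
        have hxK : x ∈ Pol v K := ⟨hx.1, fun i hi => hx.2 i (hKt hi)⟩
        obtain ⟨e, he, hstep⟩ := exists_eps (fun i => pairing n (1, w) (lft v i))
          (fun i => pairing n (1, w) (lft v i) - pairing n (1, x) (lft v i))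
        have hz : ∀ i, pairing n (1, (1 + e) • w + (-e) • x) (lft v i) =
            (1 + e) * pairing n (1, w) (lft v i) + (-e) * pairing n (1, x) (lft v i) :=
          fun i => pol_convex_comb v hv (by ring) i
        have hzt : ∀ i ∈ tight w, pairing n (1, (1 + e) • w + (-e) • x) (lft v i) = 0 := by
          intro i hi
          have hi' : pairing n (1, w) (lft v i) = 0 := hi
          rw [hz, hx.2 i hi, hi']; simp
        have hzK : (1 + e) • w + (-e) • x ∈ Pol v K := by
          refine ⟨fun i => ?_, fun i hi => hzt i (hKt hi)⟩
          by_cases hi : i ∈ tight w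
          · exact (hzt i hi).ge
          · have := hstep i (lt_of_le_of_ne (hwG.1.1 i) (fun h => hi h.symm))
            rw [hz]
            linarith
        have hL := hwG.2 _ hzK
        rw [map_add, map_smul, map_smul, smul_eq_mul, smul_eq_mul] at hL
        have hLx : L w ≤ L x := by
          by_contra hneg
          have := mul_pos he (sub_pos.2 (not_le.1 hneg))
          linarith
        rw [hGmem]
        exact ⟨hxK, fun y hy => (hwG.2 y hy).trans hLx⟩
      · intro hx
        exact ⟨((hGmem x).1 hx).1.1, fun i hi => htight x hx hi⟩
  · rintro ⟨K', hK', hsub, rfl⟩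
    rcases (Pol v K').eq_empty_or_nonempty with he | ⟨w0, hw0⟩
    · exact Or.inr (Or.inl he)
    right; right
    have hKK : Pol v K' ⊆ Pol v K := fun x hx => ⟨hx.1, fun i hi => hx.2 i (hsub hi)⟩
    let d : ι → (Fin n → ℝ) →ₗ[ℝ] ℝ := fun i =>
      (LinearMap.applyₗ (lft v i)) ∘ₗ (pairing n) ∘ₗ (LinearMap.inr ℝ ℝ (Fin n → ℝ))
    have hd : ∀ i w, d i w = pairing n (1, w) (lft v i) - 1 := by
      intro i w
      simp [d, pairing_apply, lft]
    refine ⟨-(∑ i : ι with i ∈ K', d i), ?_⟩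
    ext x
    simp only [Set.mem_ofPred_eq, LinearMap.neg_apply, LinearMap.sum_apply, neg_le_neg_iff]
    constructor
    · intro hx
      refine ⟨hKK hx, fun y hy => ?_⟩
      apply Finset.sum_le_sum
      intro i hi
      rw [hd, hd, hx.2 i (Finset.mem_filter.1 hi).2]
      linarith [hy.1 i]
    · rintro ⟨hx, hmax⟩
      refine ⟨hx.1, fun i hi => ?_⟩
      have h1 := hmax w0 (hKK hw0)
      have h2 : ∀ i ∈ Finset.univ.filter (fun i => i ∈ K'), d i w0 ≤ d i x := by
        intro i hi
        rw [hd, hd, hw0.2 i (Finset.mem_filter.1 hi).2]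
        linarith [hx.1 i]
      have h3 := (Finset.sum_eq_sum_iff_of_le h2).1 (le_antisymm (Finset.sum_le_sum h2) h1) i
        (by simp [hi])
      rw [hd, hd, hw0.2 i hi] at h3
      linarith

end Polar

theorem g_middle_config (k : ℕ) {ι : Type} [Fintype ι] (v : ι → Fin (2 * k) → ℝ)
    (hdim : pdim (convexHull ℝ (v '' Set.univ)) = (2 * k : ℤ)) (hv : PosH v) :
    (toricG (convexHull ℝ (v '' Set.univ))).coeff k = (toricG (Pol v ∅)).coeff k := by
  let α := {K : Set ι // IsF (lft v) K}
  letI : OrderBot α := { bot := ⟨∅, isF_empty v⟩, bot_le := fun a => Set.empty_subset _ }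
  letI : OrderTop α := { top := ⟨Set.univ, isF_univ v⟩, le_top := fun a => Set.subset_univ _ }
  letI : Fintype α := Fintype.ofFinite α
  let r : α → ℕ := fun K => rkF (lft v) K.1
  have hr : StrictMono r := fun a b h => rkF_strict _ a.2 h
  have hrt : r ⊤ = 2 * k + 1 := by
    have h1 : pdim (convexHull ℝ (v '' Set.univ)) = (r ⊤ : ℤ) - 1 := pdim_hull v Set.univ
    omega
  have hrn : ∀ z, r z ≤ 2 * k + 1 := fun z => hrt ▸ hr.monotone le_top
  have hE : ∀ x y : α, x < y → ∑ z : α with x ≤ z ∧ z ≤ y, (-1 : ℚ[X]) ^ r z = 0 := by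
    intro x y h
    have h1 := euler_config (lft v) x.2 y.2 h
    have h2 : ∑ z : α with x ≤ z ∧ z ≤ y, (-1 : ℚ) ^ r z = 0 := by
      rw [← h1]
      apply Finset.sum_bij (fun (z : α) _ => z.1)
      · intro z hz
        have := (Finset.mem_filter.1 hz).2
        exact Finset.mem_filter.2 ⟨Finset.mem_univ _, z.2, this.1, this.2⟩
      · intro a _ b _ h; exact Subtype.ext h
      · intro K hK
        have := (Finset.mem_filter.1 hK).2
        exact ⟨⟨K, this.1⟩, Finset.mem_filter.2 ⟨Finset.mem_univ _, this.2.1, this.2.2⟩, rfl⟩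
      · intro z _; rfl
    have := congrArg C h2
    simpa using this
  obtain ⟨hr0, g0, gs⟩ := bridge r hr (fun K : α => convexHull ℝ (v '' K.1))
    (by
      intro a b h
      apply Subtype.ext
      ext i
      have h' : convexHull ℝ (v '' a.1) = convexHull ℝ (v '' b.1) := h
      constructor
      · intro hi
        exact hull_inj_aux v b.2 i (h' ▸ subset_convexHull _ _ ⟨i, hi, rfl⟩)
      · intro hi
        exact hull_inj_aux v a.2 i (h' ▸ subset_convexHull _ _ ⟨i, hi, rfl⟩))
    (by show convexHull ℝ (v '' ∅) = ∅; simp)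
    (fun y => pdim_hull v y.1)
    (fun y G => by
      rw [face_hull v y.2]
      constructor
      · rintro ⟨K, h1, h2, h3⟩; exact ⟨⟨K, h1⟩, h2, h3⟩
      · rintro ⟨z, h1, h2⟩; exact ⟨z.1, z.2, h1, h2⟩)
  obtain ⟨_, f0, fs⟩ := bridge (α := αᵒᵈ) (fun z => 2 * k + 1 - r (OrderDual.ofDual z))
    (by
      intro a b h
      have h1 : r (OrderDual.ofDual b) < r (OrderDual.ofDual a) := hr h
      have := hrn (OrderDual.ofDual a)
      show 2 * k + 1 - _ < 2 * k + 1 - _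
      omega)
    (fun K : αᵒᵈ => Pol v (OrderDual.ofDual K).1)
    (by
      intro a b h
      have h' : Pol v (OrderDual.ofDual a).1 = Pol v (OrderDual.ofDual b).1 := h
      exact Subtype.ext (Set.Subset.antisymm
        (pol_inj_aux v hv (OrderDual.ofDual b).2 h'.ge)
        (pol_inj_aux v hv (OrderDual.ofDual a).2 h'.le)))
    (pol_univ v hv)
    (fun y => by
      rw [pdim_pol v hv (OrderDual.ofDual y).2]
      have := hrn (OrderDual.ofDual y)
      show ((2 * k : ℕ) : ℤ) - (r (OrderDual.ofDual y) : ℤ) = _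
      omega)
    (fun y G => by
      rw [face_pol v hv (OrderDual.ofDual y).2]
      constructor
      · rintro ⟨K, h1, h2, h3⟩; exact ⟨OrderDual.toDual ⟨K, h1⟩, h2, h3⟩
      · rintro ⟨z, h1, h2⟩; exact ⟨(OrderDual.ofDual z).1, (OrderDual.ofDual z).2, h1, h2⟩)
  exact KL_middle r hr hr0 k hrt hE (fun K : α => toricG (convexHull ℝ (v '' K.1))) g0 gs
    (fun K : α => toricG (Pol v K.1)) f0 (fun y hy => fs (OrderDual.toDual y) hy)

/-- For a polytope of even dimension `2k` with `0` in its interior,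
`g_k(P) = g_k(P*)`. -/
theorem g_middle_polar (k : ℕ) (P : Set (Fin (2 * k) → ℝ)) (hP : IsPolytope P)
    (hdim : pdim P = (2 * k : ℤ)) (h0 : (0 : Fin (2 * k) → ℝ) ∈ interior P) :
    (toricG P).coeff k = (toricG (polarSet P)).coeff k := by
  obtain ⟨S, rfl⟩ := hP
  have hS : (S : Set (Fin (2 * k) → ℝ)) =
      (Subtype.val : {x // x ∈ S} → Fin (2 * k) → ℝ) '' Set.univ := by
    ext; simp
  have key := g_middle_config k (Subtype.val : {x // x ∈ S} → Fin (2 * k) → ℝ)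
    (by rw [← hS]; exact hdim) (posH_of_interior _ (by rw [← hS]; exact h0))
  rw [← polarSet_eq, ← hS] at key
  exact key
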